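/- Let A and B be abelian groups with A divisible, and let φ : A → B be a surjective group homomorphism whose kernel H is finite. Then H is isomorphic, as an abelian group, to the direct sum over all primes ℓ of the cokernels of the induced maps T_ℓφ : T_ℓA → T_ℓB (all but finitely many of these cokernels being trivial). -/

import Mathlib

/-- The ℓ-adic Tate module of an abelian group `A`. An element is a sequence `P` with
`P n ∈ A[ℓ^(n+1)]` (so `P 0` plays the role of `P₁ ∈ A[ℓ]`) and `ℓ • P (n+1) = P n`. -/
def TateModule (ℓ : ℕ) (A : Type*) [AddCommGroup A] : AddSubgroup (ℕ → A) where
  carrier := {P | (∀ n, ℓ ^ (n + 1) • P n = 0) ∧ ∀ n, ℓ • P (n + 1) = P n}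
  zero_mem' := ⟨fun _ => smul_zero _, fun _ => smul_zero _⟩
  add_mem' := by
    rintro P Q ⟨hP1, hP2⟩ ⟨hQ1, hQ2⟩
    refine ⟨fun n => ?_, fun n => ?_⟩
    · show ℓ ^ (n + 1) • (P n + Q n) = 0
      rw [smul_add, hP1 n, hQ1 n, add_zero]
    · show ℓ • (P (n + 1) + Q (n + 1)) = P n + Q n
      rw [smul_add, hP2 n, hQ2 n]
  neg_mem' := by
    rintro P ⟨hP1, hP2⟩
    refine ⟨fun n => ?_, fun n => ?_⟩
    · show ℓ ^ (n + 1) • (-(P n)) = 0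
      rw [smul_neg, hP1 n, neg_zero]
    · show ℓ • (-(P (n + 1))) = -(P n)
      rw [smul_neg, hP2 n]

/-- The map induced on `ℓ`-adic Tate modules by a homomorphism of abelian groups,
given by applying it componentwise. -/
def tateMap (ℓ : ℕ) {A B : Type*} [AddCommGroup A] [AddCommGroup B] (φ : A →+ B) :
    TateModule ℓ A →+ TateModule ℓ B where
  toFun P := ⟨fun n => φ (P.1 n),
    fun n => by rw [← map_nsmul, P.2.1 n, map_zero],
    fun n => by rw [← map_nsmul, P.2.2 n]⟩
  map_zero' := Subtype.ext (funext fun _ => map_zero φ)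
  map_add' P Q := Subtype.ext (funext fun _ => map_add φ _ _)

/-- The `ℓ`-primary component of an abelian group: elements killed by a power of `ℓ`. -/
def primaryPart (ℓ : ℕ) (H : Type*) [AddCommGroup H] : AddSubgroup H where
  carrier := {h | ∃ k : ℕ, ℓ ^ k • h = 0}
  zero_mem' := ⟨0, smul_zero _⟩
  add_mem' := by
    rintro a b ⟨j, hj⟩ ⟨k, hk⟩
    refine ⟨j + k, ?_⟩
    have ha : ℓ ^ (j + k) • a = 0 := by
      rw [pow_add, mul_comm, mul_smul, hj, smul_zero]
    have hb : ℓ ^ (j + k) • b = 0 := by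
      rw [pow_add, mul_smul, hk, smul_zero]
    rw [smul_add, ha, hb, add_zero]
  neg_mem' := by
    rintro a ⟨k, hk⟩
    exact ⟨k, by rw [smul_neg, hk, neg_zero]⟩

/-! For a prime `ℓ`, a sequence `a` in `A` with `ℓ • a (n + 1) = a n` and `ℓ • a 0` in the
`ℓ`-primary part `K` of `ker φ` has two shadows: the point `ℓ • a 0` of `K`, and the class of
`φ ∘ a` in the cokernel of `T_ℓ φ`. Both maps are onto and both have kernel `T_ℓ A`, so `K` is
isomorphic to the cokernel. Divisibility of `A` makes the first map onto. For the second, let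
`ℓ ^ k` annihilate `K` and let the `b n` be arbitrary `ℓ`-primary lifts of the terms of an element
of `T_ℓ B`: the differences `ℓ • b (n + 1) - b n` lie in `K`, so the lifts `ℓ ^ k • b (n + k)` are
compatible. Finally, a torsion group is the direct sum of its primary parts. -/

section PrimaryPart

variable {H : Type*} [AddCommGroup H]

theorem mem_primaryPart {ℓ : ℕ} {h : H} : h ∈ primaryPart ℓ H ↔ ∃ k : ℕ, ℓ ^ k • h = 0 :=
  Iff.rfl

theorem pow_factorization_nsmul_eq_zero {ℓ N : ℕ} (hℓ : ℓ.Prime) (hN : N ≠ 0) {h : H}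
    (hmem : h ∈ primaryPart ℓ H) (hNh : N • h = 0) : ℓ ^ N.factorization ℓ • h = 0 := by
  obtain ⟨k, hk⟩ := hmem
  obtain ⟨j, -, hj⟩ := (Nat.dvd_prime_pow hℓ).1 (addOrderOf_dvd_of_nsmul_eq_zero hk)
  have hjN : ℓ ^ j ∣ N := hj ▸ addOrderOf_dvd_of_nsmul_eq_zero hNh
  rw [← addOrderOf_dvd_iff_nsmul_eq_zero, hj]
  exact pow_dvd_pow ℓ ((hℓ.pow_dvd_iff_le_factorization hN).1 hjN)

theorem finite_setOf_nontrivial_primaryPart (hH : AddMonoid.ExponentExists H) :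
    {ℓ : Nat.Primes | Nontrivial (primaryPart ℓ H)}.Finite := by
  obtain ⟨N, hN, hNH⟩ := hH
  refine (N.primeFactors.finite_toSet.preimage Subtype.val_injective.injOn).subset ?_
  intro ℓ (hℓ : Nontrivial (primaryPart ℓ H))
  by_contra hmem
  obtain ⟨⟨h, hprim⟩, hne⟩ := exists_ne (0 : primaryPart ℓ H)
  have hfact : N.factorization ℓ = 0 := Finsupp.notMem_support_iff.1 hmem
  have hzero : h = 0 := by
    simpa [hfact] using pow_factorization_nsmul_eq_zero ℓ.2 hN.ne' hprim (hNH h)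
  exact hne (Subtype.ext hzero)

open IsDedekindDomain Rat.HeightOneSpectrum

theorem asIdeal_primesEquiv_symm (ℓ : Nat.Primes) :
    (primesEquiv.symm ℓ : HeightOneSpectrum ℤ).asIdeal = Ideal.span {((ℓ : ℕ) : ℤ)} := by
  change (Ideal.span {((ℓ : ℕ) : ℤ)}).map (Rat.IsIntegralClosure.intEquiv ℤ).symm = _
  rw [Ideal.map_span, Set.image_singleton, map_natCast]

theorem primaryComponent_span_eq_toIntSubmodule_primaryPart (ℓ : ℕ) :
    Ideal.primaryComponent H (Ideal.span {(ℓ : ℤ)}) =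
      AddSubgroup.toIntSubmodule (primaryPart ℓ H) := by
  ext h
  simp only [Ideal.primaryComponent_mem, Ideal.span_singleton_pow,
    Submodule.torsionBySet_span_singleton_eq, Submodule.mem_torsionBy_iff,
    ← Nat.cast_pow, natCast_zsmul]
  exact mem_primaryPart.symm

theorem isInternal_primaryPart (hH : IsAddTorsion H) :
    DirectSum.IsInternal fun ℓ : Nat.Primes => primaryPart ℓ H := by
  have heq (ℓ : Nat.Primes) : Ideal.primaryComponent H
      (primesEquiv.symm ℓ : HeightOneSpectrum ℤ).asIdeal =
        AddSubgroup.toIntSubmodule (primaryPart ℓ H) := by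
    rw [asIdeal_primesEquiv_symm, primaryComponent_span_eq_toIntSubmodule_primaryPart]
  have hindep : iSupIndep fun ℓ : Nat.Primes => AddSubgroup.toIntSubmodule (primaryPart ℓ H) := by
    simpa only [← heq, Function.comp_def] using
      (Ideal.iSupIndep_primaryComponent ℤ H).comp primesEquiv.symm.injective
  have htop : ⨆ ℓ : Nat.Primes, AddSubgroup.toIntSubmodule (primaryPart ℓ H) = ⊤ := by
    simp only [← heq]
    rw [primesEquiv.symm.iSup_comp
      (g := fun v : HeightOneSpectrum ℤ => Ideal.primaryComponent H v.asIdeal)]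
    exact Ideal.iSup_primaryComponent_eq_top (isAddTorsion_iff_isTorsion_int.1 hH)
  exact DirectSum.isInternal_submodule_of_iSupIndep_of_iSup_eq_top hindep htop

end PrimaryPart

section DivisionSequences

open Function

variable {A B : Type*} [AddCommGroup A] [AddCommGroup B] {ℓ : ℕ}

theorem pow_nsmul_add_of_nsmul_succ {a : ℕ → A} (ha : ∀ n, ℓ • a (n + 1) = a n) (n k : ℕ) :
    ℓ ^ k • a (n + k) = a n := by
  induction k with
  | zero => simp
  | succ k ih => rw [pow_succ, mul_smul, ← add_assoc, ha, ih]

theorem pow_succ_nsmul_of_nsmul_succ {a : ℕ → A} (ha : ∀ n, ℓ • a (n + 1) = a n) (n : ℕ) :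
    ℓ ^ (n + 1) • a n = ℓ • a 0 := by
  rw [pow_succ', mul_smul, ← pow_nsmul_add_of_nsmul_succ ha 0 n, zero_add]

theorem mem_tateModule_iff {P : ℕ → A} :
    P ∈ TateModule ℓ A ↔ ℓ • P 0 = 0 ∧ ∀ n, ℓ • P (n + 1) = P n :=
  ⟨fun hP => ⟨by simpa using hP.1 0, hP.2⟩,
    fun hP => ⟨fun n => (pow_succ_nsmul_of_nsmul_succ hP.2 n).trans hP.1, hP.2⟩⟩

/-- The sequences obtained from a point `ℓ • a 0` of a subgroup `K` of `A` by successively dividing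
by `ℓ`. They interpolate between `K` and Tate modules: for `K = 0` they form `T_ℓ A`. -/
def divisionSequences (ℓ : ℕ) (K : AddSubgroup A) : AddSubgroup (ℕ → A) where
  carrier := {a | ℓ • a 0 ∈ K ∧ ∀ n, ℓ • a (n + 1) = a n}
  zero_mem' := by simp
  add_mem' ha hb := ⟨by simpa using add_mem ha.1 hb.1, fun n => by simp [ha.2 n, hb.2 n]⟩
  neg_mem' ha := ⟨by simpa using ha.1, fun n => by simp [ha.2 n]⟩

namespace divisionSequences

variable {K : AddSubgroup A}

/-- The point of `K` that a division sequence divides. -/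
def base (ℓ : ℕ) (K : AddSubgroup A) : divisionSequences ℓ K →+ K where
  toFun a := ⟨ℓ • a.1 0, a.2.1⟩
  map_zero' := by simp
  map_add' a b := by simp

theorem base_surjective (hdiv : Surjective fun a : A => ℓ • a) : Surjective (base ℓ K) := by
  intro ⟨h, hh⟩
  choose divide hdivide using hdiv
  let a : ℕ → A := fun n => divide^[n + 1] h
  have ha (n : ℕ) : ℓ • a (n + 1) = a n := by
    simp only [a, iterate_succ_apply' divide (n + 1), hdivide]
  exact ⟨⟨a, by simpa [a, hdivide] using hh, ha⟩, Subtype.ext (hdivide h)⟩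

/-- The image under `φ` of a division sequence of a point of `ker φ`, an element of `T_ℓ B`. -/
def toTateModule {φ : A →+ B} (hK : K ≤ φ.ker) : divisionSequences ℓ K →+ TateModule ℓ B where
  toFun a := ⟨fun n => φ (a.1 n), mem_tateModule_iff.2
    ⟨by rw [← map_nsmul]; exact hK a.2.1, fun n => by rw [← map_nsmul, a.2.2]⟩⟩
  map_zero' := Subtype.ext (funext fun _ => map_zero φ)
  map_add' _ _ := Subtype.ext (funext fun _ => map_add φ _ _)

end divisionSequences

end DivisionSequences

section Cokernel

open Function

variable {A B : Type*} [AddCommGroup A] [AddCommGroup B] {ℓ k : ℕ} {φ : A →+ B}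

/-- The `ℓ`-primary part of `ker φ`, as a subgroup of `A`. -/
def primaryKer (ℓ : ℕ) (φ : A →+ B) : AddSubgroup A :=
  (primaryPart ℓ φ.ker).map φ.ker.subtype

theorem mem_primaryKer {a : A} : a ∈ primaryKer ℓ φ ↔ φ a = 0 ∧ a ∈ primaryPart ℓ A := by
  simp [primaryKer, mem_primaryPart, Subtype.ext_iff, and_comm]

theorem primaryKer_le_ker : primaryKer ℓ φ ≤ φ.ker :=
  fun _ ha => (mem_primaryKer.1 ha).1

/-- The map sending a division sequence `a` to the class of `φ ∘ a` in the cokernel of `T_ℓ φ`. -/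
def divisionSequencesToCoker (ℓ : ℕ) (φ : A →+ B) :
    divisionSequences ℓ (primaryKer ℓ φ) →+ TateModule ℓ B ⧸ (tateMap ℓ φ).range :=
  (QuotientAddGroup.mk' _).comp (divisionSequences.toTateModule primaryKer_le_ker)

theorem divisionSequencesToCoker_eq_zero_iff {a : divisionSequences ℓ (primaryKer ℓ φ)} :
    divisionSequencesToCoker ℓ φ a = 0 ↔ ∃ P ∈ TateModule ℓ A, ∀ n, φ (P n) = φ (a.1 n) := by
  refine (QuotientAddGroup.eq_zero_iff _).trans ⟨?_, ?_⟩
  · rintro ⟨P, hP⟩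
    exact ⟨P, P.2, congrFun (congrArg Subtype.val hP)⟩
  · rintro ⟨P, hP, hPa⟩
    exact ⟨⟨P, hP⟩, Subtype.ext (funext hPa)⟩

theorem ker_divisionSequencesToCoker (hexp : ∀ h ∈ primaryKer ℓ φ, ℓ ^ k • h = 0) :
    (divisionSequencesToCoker ℓ φ).ker = (divisionSequences.base ℓ (primaryKer ℓ φ)).ker := by
  ext ⟨a, hbase, ha⟩
  simp only [AddMonoidHom.mem_ker, divisionSequencesToCoker_eq_zero_iff]
  constructor
  · rintro ⟨P, hP, hPa⟩
    have hsucc (n : ℕ) : ℓ ^ (n + 1) • (a n - P n) = ℓ • a 0 := by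
      rw [smul_sub, pow_succ_nsmul_of_nsmul_succ ha, hP.1, sub_zero]
    obtain ⟨j, hj⟩ := (mem_primaryKer.1 hbase).2
    have hmem : a k - P k ∈ primaryKer ℓ φ :=
      mem_primaryKer.2 ⟨by rw [map_sub, hPa, sub_self],
        j + (k + 1), by rw [pow_add, mul_smul, hsucc, hj]⟩
    have hzero : ℓ • a 0 = 0 := by
      rw [← hsucc k, pow_succ', mul_smul, hexp _ hmem, smul_zero]
    exact Subtype.ext hzero
  · intro hzero
    exact ⟨a, mem_tateModule_iff.2 ⟨congrArg Subtype.val hzero, ha⟩, fun _ => rfl⟩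

theorem exists_mem_primaryPart_map_eq (hℓ : ℓ.Prime) (hsurj : Surjective φ)
    (htors : IsAddTorsion φ.ker) {b : B} (hb : b ∈ primaryPart ℓ B) :
    ∃ a ∈ primaryPart ℓ A, φ a = b := by
  obtain ⟨a, rfl⟩ := hsurj b
  obtain ⟨k, hk⟩ := hb
  obtain ⟨N, hN, hNa⟩ : ∃ N, 0 < N ∧ N • ℓ ^ k • a = 0 := by
    obtain ⟨N, hN, hNa⟩ := (htors ⟨ℓ ^ k • a, by simpa using hk⟩).exists_nsmul_eq_zero
    exact ⟨N, hN, congrArg Subtype.val hNa⟩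
  obtain ⟨v, m, hm, rfl⟩ := Nat.exists_eq_pow_mul_and_not_dvd hN.ne' ℓ hℓ.ne_one
  have hcop : (ℓ ^ k).Coprime m := ((hℓ.coprime_iff_not_dvd).2 hm).pow_left k
  -- Multiplying by `c` removes the prime-to-`ℓ` torsion of `a` without moving its image.
  obtain ⟨c, hc_one, hc_zero⟩ := Nat.chineseRemainder hcop 1 0
  obtain ⟨d, rfl⟩ := Nat.modEq_zero_iff_dvd.1 hc_zero
  refine ⟨(m * d) • a, ⟨v + k, ?_⟩, ?_⟩
  · calc ℓ ^ (v + k) • (m * d) • a = d • (ℓ ^ v * m) • ℓ ^ k • a := by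
          simp only [← mul_smul]; ring_nf
      _ = 0 := by rw [hNa, smul_zero]
  · calc φ ((m * d) • a) = (m * d) • φ a := map_nsmul φ _ _
      _ = 1 • φ a := nsmul_eq_nsmul_iff_modEq.2 <| hc_one.of_dvd <|
          addOrderOf_dvd_of_nsmul_eq_zero (by simpa using hk)
      _ = φ a := one_nsmul _

theorem divisionSequencesToCoker_surjective (hℓ : ℓ.Prime) (hsurj : Surjective φ)
    (htors : IsAddTorsion φ.ker) (hexp : ∀ h ∈ primaryKer ℓ φ, ℓ ^ k • h = 0) :
    Surjective (divisionSequencesToCoker ℓ φ) := by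
  intro q
  obtain ⟨⟨Q, hQtors, hQ⟩, rfl⟩ := QuotientAddGroup.mk_surjective q
  choose b hb hbQ using fun n =>
    exists_mem_primaryPart_map_eq hℓ hsurj htors (b := Q n) ⟨n + 1, hQtors n⟩
  let a : ℕ → A := fun n => ℓ ^ k • b (n + k)
  have hφa (n : ℕ) : φ (a n) = Q n := by
    rw [map_nsmul, hbQ, pow_nsmul_add_of_nsmul_succ hQ]
  have ha (n : ℕ) : ℓ • a (n + 1) = a n := by
    have hmem : ℓ • b (n + k + 1) - b (n + k) ∈ primaryKer ℓ φ :=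
      mem_primaryKer.2 ⟨by rw [map_sub, map_nsmul, hbQ, hbQ, hQ, sub_self],
        sub_mem (nsmul_mem (hb _) ℓ) (hb _)⟩
    have hzero := hexp _ hmem
    rw [smul_sub, sub_eq_zero, smul_comm] at hzero
    simpa only [a, Nat.add_right_comm n 1 k] using hzero
  have hbase : ℓ • a 0 ∈ primaryKer ℓ φ :=
    mem_primaryKer.2 ⟨by rw [map_nsmul, hφa]; simpa using hQtors 0,
      nsmul_mem (nsmul_mem (hb _) _) _⟩
  exact ⟨⟨a, hbase, ha⟩, congrArg (QuotientAddGroup.mk' _) (Subtype.ext (funext hφa))⟩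

theorem nonempty_primaryPart_ker_addEquiv_coker_tateMap (hℓ : ℓ.Prime)
    (hdiv : Surjective fun a : A => ℓ • a) (hsurj : Surjective φ) (htors : IsAddTorsion φ.ker)
    (hexp : ∀ h ∈ primaryPart ℓ φ.ker, ℓ ^ k • h = 0) :
    Nonempty (primaryPart ℓ φ.ker ≃+ TateModule ℓ B ⧸ (tateMap ℓ φ).range) := by
  have hexpA : ∀ a ∈ primaryKer ℓ φ, ℓ ^ k • a = 0 := by
    rintro _ ⟨h, hh, rfl⟩
    rw [← map_nsmul, hexp h hh, map_zero]
  have toPrimaryKer : primaryPart ℓ φ.ker ≃+ primaryKer ℓ φ :=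
    AddSubgroup.equivMapOfInjective _ _ φ.ker.subtype_injective
  exact ⟨toPrimaryKer
    |>.trans (QuotientAddGroup.quotientKerEquivOfSurjective _
      (divisionSequences.base_surjective hdiv)).symm
    |>.trans (QuotientAddGroup.quotientAddEquivOfEq (ker_divisionSequencesToCoker hexpA).symm)
    |>.trans (QuotientAddGroup.quotientKerEquivOfSurjective _
      (divisionSequencesToCoker_surjective hℓ hsurj htors hexpA))⟩

end Cokernel

open DirectSum in
theorem ker_isomorphic_directSum_coker_tateMap_general
    {A B : Type*} [AddCommGroup A] [AddCommGroup B]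
    (hdiv : ∀ (a : A) (n : ℕ), 0 < n → ∃ b : A, n • b = a)
    {φ : A →+ B} (hsurj : Function.Surjective φ) (hker : AddMonoid.ExponentExists φ.ker) :
    {ℓ : Nat.Primes | Nontrivial (TateModule (ℓ : ℕ) B ⧸ (tateMap (ℓ : ℕ) φ).range)}.Finite ∧
    Nonempty (φ.ker ≃+
      ⨁ ℓ : Nat.Primes, TateModule (ℓ : ℕ) B ⧸ (tateMap (ℓ : ℕ) φ).range) := by
  have htors : IsAddTorsion φ.ker := ExponentExists.isAddTorsion hker
  have ⟨N, hN, hNker⟩ := hker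
  have toCoker (ℓ : Nat.Primes) :
      primaryPart ℓ φ.ker ≃+ TateModule ℓ B ⧸ (tateMap ℓ φ).range :=
    (nonempty_primaryPart_ker_addEquiv_coker_tateMap ℓ.2 (fun a => hdiv a ℓ ℓ.2.pos) hsurj htors
      fun h hh => pow_factorization_nsmul_eq_zero ℓ.2 hN.ne' hh (hNker h)).some
  constructor
  · simpa only [← (toCoker _).toEquiv.nontrivial_congr] using
      finite_setOf_nontrivial_primaryPart hker
  · exact ⟨(AddEquiv.ofBijective _ (isInternal_primaryPart htors)).symm.trans
      (congrAddEquiv toCoker)⟩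

open DirectSum in
/-- Let `A`, `B` be abelian groups with `A` divisible and let `φ : A → B` be
a surjective homomorphism with finite kernel `H`. Then `H` is isomorphic to the direct sum,
over all primes `ℓ`, of the cokernels of `T_ℓφ : T_ℓA → T_ℓB`, all but finitely many of these
cokernels being trivial. -/
theorem ker_isomorphic_directSum_coker_tateMap
    (A B : Type*) [AddCommGroup A] [AddCommGroup B]
    (hdiv : ∀ (a : A) (n : ℕ), 0 < n → ∃ b : A, n • b = a)
    (φ : A →+ B) (hsurj : Function.Surjective φ) (hker : Finite φ.ker) :
    {ℓ : Nat.Primes | Nontrivial (TateModule (ℓ : ℕ) B ⧸ (tateMap (ℓ : ℕ) φ).range)}.Finite ∧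
    Nonempty (φ.ker ≃+
      ⨁ ℓ : Nat.Primes, TateModule (ℓ : ℕ) B ⧸ (tateMap (ℓ : ℕ) φ).range) :=
  ker_isomorphic_directSum_coker_tateMap_general hdiv hsurj .of_finite
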